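/- Distinct translates of I_n are distinct: for every n ∈ ℕ and u, v ∈ 𝔽, if u·I_n = v·I_n then u = v. -/

import Mathlib

/-! The set `IS n` is finite and nonempty. If `u • IS n = v • IS n`, then `w = v⁻¹ * u` fixes `IS n`,
and since `1 ∈ IS n`, every power of `w` lies in the finite set `IS n`; hence `w` has finite order.
The free group is torsion-free, so `w = 1`. -/

open Pointwise

/-- The free group on two generators. -/
abbrev F2 := FreeGroup (Fin 2)

/-- The first generator `a` of the free group. -/
def fa : F2 := FreeGroup.of 0

/-- The second generator `b` of the free group. -/
def fb : F2 := FreeGroup.of 1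

/-- `ℓ_n ∈ {a, a⁻¹, b, b⁻¹}` defined according to `n % 4`. -/
def ell (n : ℕ) : F2 :=
  if n % 4 = 0 then fa else if n % 4 = 1 then fa⁻¹ else if n % 4 = 2 then fb else fb⁻¹

/-- The increasing chain of finite subsets `I_n ⊆ 𝔽`: `I_0 = {e}`,
`I_{n+1} = I_n ∪ ℓ_n · I_n`. -/
def IS : ℕ → Set F2
  | 0 => {1}
  | n + 1 => IS n ∪ ell n • IS n

/-- The set `𝕀` of intervals of `𝔽`: all translates `w · I_n`, together with `∅`. -/
def Intervals : Set (Set F2) :=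
  {S | S = ∅ ∨ ∃ (w : F2) (n : ℕ), S = w • IS n}

/-- Word length of an element of the free group: the length of its reduced word. -/
def len (w : F2) : ℕ := w.toWord.length

theorem IS_finite (n : ℕ) : (IS n).Finite := by
  induction n with
  | zero => exact Set.finite_singleton 1
  | succ n ih => exact ih.union ih.smul_set

theorem one_mem_IS (n : ℕ) : (1 : F2) ∈ IS n := by
  induction n with
  | zero => exact rfl
  | succ n ih => exact Or.inl ih

/-- Distinct translates of `I_n` are distinct: if `u·I_n = v·I_n` then `u = v`. -/
theorem translate_IS_injective (n : ℕ) (u v : F2) (h : u • IS n = v • IS n) : u = v := by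
  have hw : (v⁻¹ * u) • IS n = IS n := by
    rw [mul_smul, h, inv_smul_smul]
  have hpow : ∀ k : ℕ, (v⁻¹ * u) ^ k ∈ IS n := by
    intro k
    induction k with
    | zero => simpa using one_mem_IS n
    | succ k ih =>
      rw [pow_succ', ← hw]
      exact Set.smul_mem_smul_set ih
  have hfin : IsOfFinOrder (v⁻¹ * u) := by
    by_contra hinf
    exact Set.infinite_of_injective_forall_mem
      (injective_pow_iff_not_isOfFinOrder.mpr hinf) hpow (IS_finite n)
  obtain ⟨k, hk, hk1⟩ := isOfFinOrder_iff_pow_eq_one.mp hfin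
  exact (inv_mul_eq_one.mp ((pow_eq_one_iff_left hk.ne').mp hk1)).symm
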